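/- Let K ⊆ ℝⁿ × ℝ be a convex compact set containing a point (x₀,y₀) with y₀ ≤ 0. Then the following are equivalent: (a) for every positive-valued continuous convex function f : ℝⁿ → ℝ whose epigraph L is disjoint from K, one has G⁻(x) = G⁺(x) for all x ∈ ℝⁿ; (b) there exist no point x₁ ∈ ℝⁿ and real numbers 0 < y₁ < y₂ such that (x₁,y₁) ∉ K and (x₁,y₂) ∈ K. -/

import Mathlib

open Metric Set

noncomputable section

/-- `ℝⁿ × ℝ` with the Euclidean (ℓ²) metric. -/
abbrev EucProd (n : ℕ) := WithLp 2 (EuclideanSpace ℝ (Fin n) × ℝ)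

/-- The point of `ℝⁿ × ℝ` with first component `x` and last coordinate `y`. -/
def pt {n : ℕ} (x : EuclideanSpace ℝ (Fin n)) (y : ℝ) : EucProd n :=
  (WithLp.equiv 2 (EuclideanSpace ℝ (Fin n) × ℝ)).symm (x, y)

/-- The epigraph of `f : ℝⁿ → ℝ`, viewed as a subset of `ℝⁿ × ℝ`. -/
def epigraph {n : ℕ} (f : EuclideanSpace ℝ (Fin n) → ℝ) : Set (EucProd n) :=
  {p | f ((WithLp.equiv 2 (EuclideanSpace ℝ (Fin n) × ℝ)) p).1 ≤
      ((WithLp.equiv 2 (EuclideanSpace ℝ (Fin n) × ℝ)) p).2}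

/-- The upper equidistant function `G⁺` associated with the focal sets `K` and `L`:
`G⁺(x) = sup {y | d((x,y),K) = d((x,y),L)}`. -/
def Gplus {n : ℕ} (K L : Set (EucProd n)) (x : EuclideanSpace ℝ (Fin n)) : ℝ :=
  sSup {y : ℝ | Metric.infDist (pt x y) K = Metric.infDist (pt x y) L}

/-- The lower equidistant function `G⁻` associated with the focal sets `K` and `L`:
`G⁻(x) = inf {y | d((x,y),K) = d((x,y),L)}`. -/
def Gminus {n : ℕ} (K L : Set (EucProd n)) (x : EuclideanSpace ℝ (Fin n)) : ℝ :=
  sInf {y : ℝ | Metric.infDist (pt x y) K = Metric.infDist (pt x y) L}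

/-! Far down a vertical line `K` is closer than the epigraph `L`, and from the graph of `f` upwards
`L` is closer, so the equidistant heights form a nonempty bounded set and `G⁻ = G⁺` says that this
set is a single point.

Suppose `K` has no overhang, and move down a vertical line from a point at least as close to `K` as
to `L`. At nonnegative heights the distance to `K` does not increase, while the distance to `L`
strictly increases because `L` is convex. At nonpositive heights the nearest point of `K` has
nonpositive height, hence lies below every point of `L`, and moving down favours the lower of two
competing points. So all lower points are strictly closer to `K`, and only one height is
equidistant.

If `K` has an overhang, a hyperplane separating a point below it from `K` lets us slide to a point
`u` where a linear functional `ψ` is maximal on the projection of `K`, keeping a gap at some height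
`δ > 0` below a point `(u, α)` of `K`. The epigraph of `f w = max δ (h - M ψ(w - u))` misses `K` for
`h` above all heights of `K`, but for `M` large `f` falls to `δ` so close to `u` that `(u, δ)` is
nearer to `L` than to `K`. Along the vertical line through `u` the closer set is then `L`, `K`, `L`
at the heights `δ < α < f u`. -/

theorem sInf_eq_sSup_iff_subsingleton {α : Type*} [ConditionallyCompleteLattice α] {s : Set α}
    (hne : s.Nonempty) (hb : BddBelow s) (ha : BddAbove s) :
    sInf s = sSup s ↔ s.Subsingleton := by
  refine ⟨fun h y hy z hz => ?_, fun h => ?_⟩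
  · exact le_antisymm ((le_csSup ha hy).trans (h ▸ csInf_le hb hz))
      ((le_csSup ha hz).trans (h ▸ csInf_le hb hy))
  · obtain ⟨y, rfl⟩ := h.eq_empty_or_singleton.resolve_left hne.ne_empty
    rw [csInf_singleton, csSup_singleton]

theorem infDist_lineMap_lt_infDist {E : Type*} [NormedAddCommGroup E] [NormedSpace ℝ E] {L : Set E}
    {c p : E} {t : ℝ} (hL : IsClosed L) (hconv : StarConvex ℝ c L) (hc : c ∈ L) (hp : p ∉ L)
    (ht₀ : 0 < t) (ht₁ : t < 1) : infDist (AffineMap.lineMap c p t) L < infDist p L := by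
  have hcontract : infDist (AffineMap.lineMap c p t) L / t ≤ infDist p L := by
    refine (le_infDist ⟨c, hc⟩).2 fun {q} hq => (div_le_iff₀' ht₀).2 ?_
    have hmem : AffineMap.lineMap c q t ∈ L := by
      rw [AffineMap.lineMap_apply_module]
      exact hconv hq (sub_nonneg.2 ht₁.le) ht₀.le (sub_add_cancel 1 t)
    calc infDist (AffineMap.lineMap c p t) L
        ≤ dist (AffineMap.lineMap c p t) (AffineMap.lineMap c q t) := infDist_le_dist_of_mem hmem
      _ = t * dist p q := by
        rw [← AffineMap.homothety_eq_lineMap, ← AffineMap.homothety_eq_lineMap]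
        simp [dist_eq_norm, AffineMap.homothety_apply, ← smul_sub, norm_smul, abs_of_pos ht₀]
  have hpos : 0 < infDist p L := (hL.notMem_iff_infDist_pos ⟨c, hc⟩).1 hp
  calc infDist (AffineMap.lineMap c p t) L ≤ t * infDist p L := (div_le_iff₀' ht₀).1 hcontract
    _ < infDist p L := mul_lt_of_lt_one_left hpos ht₁

section EquidistantHeights

open WithLp

variable {V : Type*}

/-- The epigraph of `f`, as a subset of the `ℓ²` product `V × ℝ`; for `V = ℝⁿ` it is the set
`epigraph f`. -/
def l2Epigraph (f : V → ℝ) : Set (WithLp 2 (V × ℝ)) :=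
  {p | f p.fst ≤ p.snd}

/-- A point of `K` lies vertically above a point outside `K` of positive height: the configuration
excluded by condition (b). -/
def HasOverhang (K : Set (WithLp 2 (V × ℝ))) : Prop :=
  ∃ (x₁ : V) (y₁ y₂ : ℝ), 0 < y₁ ∧ y₁ < y₂ ∧ toLp 2 (x₁, y₁) ∉ K ∧ toLp 2 (x₁, y₂) ∈ K

theorem toLp_mem_l2Epigraph {f : V → ℝ} {x : V} {y : ℝ} : toLp 2 (x, y) ∈ l2Epigraph f ↔ f x ≤ y :=
  Iff.rfl

variable [NormedAddCommGroup V]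

theorem sq_dist_toLp (x u : V) (y v : ℝ) :
    dist (toLp 2 (x, y)) (toLp 2 (u, v)) ^ 2 = dist x u ^ 2 + (y - v) ^ 2 := by
  rw [prod_dist_eq_of_L2, Real.sq_sqrt (by positivity)]
  simp only [toLp_fst, toLp_snd, Real.dist_eq, sq_abs]

theorem dist_toLp_le_dist_toLp_iff {x u x' u' : V} {y v y' v' : ℝ} :
    dist (toLp 2 (x, y)) (toLp 2 (u, v)) ≤ dist (toLp 2 (x', y')) (toLp 2 (u', v')) ↔
      dist x u ^ 2 + (y - v) ^ 2 ≤ dist x' u' ^ 2 + (y' - v') ^ 2 := by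
  rw [← sq_le_sq₀ dist_nonneg dist_nonneg, sq_dist_toLp, sq_dist_toLp]

theorem dist_toLp_lt_dist_toLp_iff {x u x' u' : V} {y v y' v' : ℝ} :
    dist (toLp 2 (x, y)) (toLp 2 (u, v)) < dist (toLp 2 (x', y')) (toLp 2 (u', v')) ↔
      dist x u ^ 2 + (y - v) ^ 2 < dist x' u' ^ 2 + (y' - v') ^ 2 := by
  simpa only [not_le] using dist_toLp_le_dist_toLp_iff.not

theorem dist_toLp_right (x u : V) (y : ℝ) :
    dist (toLp 2 (x, y)) (toLp 2 (u, y)) = dist x u := by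
  rw [← sq_eq_sq₀ dist_nonneg dist_nonneg, sq_dist_toLp, sub_self, zero_pow two_ne_zero, add_zero]

theorem dist_toLp_lt_of_dist_toLp_le {x u w : V} {a b v z : ℝ} (hab : a < b) (hvz : v < z)
    (h : dist (toLp 2 (x, b)) (toLp 2 (u, v)) ≤ dist (toLp 2 (x, b)) (toLp 2 (w, z))) :
    dist (toLp 2 (x, a)) (toLp 2 (u, v)) < dist (toLp 2 (x, a)) (toLp 2 (w, z)) := by
  rw [dist_toLp_le_dist_toLp_iff] at h
  rw [dist_toLp_lt_dist_toLp_iff]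
  nlinarith [mul_pos (sub_pos.2 hab) (sub_pos.2 hvz)]

theorem continuous_toLp_right (x : V) : Continuous fun y : ℝ => toLp 2 (x, y) :=
  (prod_continuous_toLp 2 V ℝ).comp (Continuous.prodMk_right x)

/-- The heights `y` at which `(x, y)` is equidistant from `K` and `L`; `G⁺(x)` and `G⁻(x)` are the
supremum and the infimum of this set. -/
def equidistantHeights (K L : Set (WithLp 2 (V × ℝ))) (x : V) : Set ℝ :=
  {y | infDist (toLp 2 (x, y)) K = infDist (toLp 2 (x, y)) L}

theorem exists_mem_equidistantHeights_uIcc {K L : Set (WithLp 2 (V × ℝ))} {x : V} {a b : ℝ}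
    (ha : infDist (toLp 2 (x, a)) K < infDist (toLp 2 (x, a)) L)
    (hb : infDist (toLp 2 (x, b)) L < infDist (toLp 2 (x, b)) K) :
    ∃ y ∈ uIcc a b, y ∈ equidistantHeights K L x := by
  have continuous_infDist (S : Set (WithLp 2 (V × ℝ))) :
      Continuous fun y : ℝ => infDist (toLp 2 (x, y)) S :=
    (continuous_infDist_pt S).comp (continuous_toLp_right x)
  exact isPreconnected_uIcc.intermediate_value₂ left_mem_uIcc right_mem_uIcc
    (continuous_infDist K).continuousOn (continuous_infDist L).continuousOn ha.le hb.le

theorem not_subsingleton_equidistantHeights_of_lt_of_lt {K L : Set (WithLp 2 (V × ℝ))} {x : V}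
    {a b c : ℝ} (hab : a < b) (hbc : b < c)
    (ha : infDist (toLp 2 (x, a)) L < infDist (toLp 2 (x, a)) K)
    (hb : infDist (toLp 2 (x, b)) K < infDist (toLp 2 (x, b)) L)
    (hc : infDist (toLp 2 (x, c)) L < infDist (toLp 2 (x, c)) K) :
    ¬ (equidistantHeights K L x).Subsingleton := by
  intro h
  obtain ⟨y, hy, hyE⟩ := exists_mem_equidistantHeights_uIcc hb ha
  obtain ⟨z, hz, hzE⟩ := exists_mem_equidistantHeights_uIcc hb hc
  rw [uIcc_of_ge hab.le] at hy
  rw [uIcc_of_le hbc.le] at hz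
  have hyb : y = b := le_antisymm hy.2 (h hzE hyE ▸ hz.1)
  exact hb.ne (hyb ▸ hyE)

section Epigraph

variable {f : V → ℝ} {K : Set (WithLp 2 (V × ℝ))} {x x₀ : V} {y₀ : ℝ}

theorem l2Epigraph_nonempty (f : V → ℝ) : (l2Epigraph f).Nonempty :=
  ⟨toLp 2 (0, f 0), toLp_mem_l2Epigraph.2 le_rfl⟩

theorem isClosed_l2Epigraph (hf : Continuous f) : IsClosed (l2Epigraph f) :=
  isClosed_le (hf.comp (WithLp.continuous_fst ..)) (WithLp.continuous_snd ..)

theorem convex_l2Epigraph [NormedSpace ℝ V] (hf : ConvexOn ℝ univ f) : Convex ℝ (l2Epigraph f) := by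
  have := hf.convex_epigraph.linear_preimage (WithLp.linearEquiv 2 ℝ (V × ℝ)).toLinearMap
  simp only [mem_univ, true_and] at this
  exact this

theorem infDist_l2Epigraph_lt_infDist_of_le (hK : IsClosed K) (hne : K.Nonempty)
    (hd : Disjoint K (l2Epigraph f)) {y : ℝ} (hy : f x ≤ y) :
    infDist (toLp 2 (x, y)) (l2Epigraph f) < infDist (toLp 2 (x, y)) K := by
  have hmem : toLp 2 (x, y) ∈ l2Epigraph f := hy
  rw [infDist_zero_of_mem hmem]
  exact (hK.notMem_iff_infDist_pos hne).1 (hd.notMem_of_mem_right hmem)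

theorem lt_of_infDist_le_infDist_l2Epigraph (hK : IsClosed K) (hne : K.Nonempty)
    (hd : Disjoint K (l2Epigraph f)) {y : ℝ}
    (hy : infDist (toLp 2 (x, y)) K ≤ infDist (toLp 2 (x, y)) (l2Epigraph f)) : y < f x :=
  lt_of_not_ge fun h => (infDist_l2Epigraph_lt_infDist_of_le hK hne hd h).not_ge hy

theorem not_subsingleton_equidistantHeights_of_dist_lt (hK : IsClosed K) (hf : Continuous f)
    (hd : Disjoint K (l2Epigraph f)) {u w : V} {δ α : ℝ} (hδα : δ < α) (hα : toLp 2 (u, α) ∈ K)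
    (hw : f w ≤ δ) (huw : dist u w < infDist (toLp 2 (u, δ)) K) :
    ¬ (equidistantHeights K (l2Epigraph f) u).Subsingleton := by
  have hαf : toLp 2 (u, α) ∉ l2Epigraph f := hd.notMem_of_mem_left hα
  refine not_subsingleton_equidistantHeights_of_lt_of_lt hδα (not_le.1 hαf) ?_ ?_
    (infDist_l2Epigraph_lt_infDist_of_le hK ⟨_, hα⟩ hd le_rfl)
  · calc infDist (toLp 2 (u, δ)) (l2Epigraph f)
        ≤ dist (toLp 2 (u, δ)) (toLp 2 (w, δ)) :=
          infDist_le_dist_of_mem (toLp_mem_l2Epigraph.2 hw)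
      _ = dist u w := dist_toLp_right u w δ
      _ < infDist (toLp 2 (u, δ)) K := huw
  · rw [infDist_zero_of_mem hα]
    exact ((isClosed_l2Epigraph hf).notMem_iff_infDist_pos (l2Epigraph_nonempty f)).1 hαf

variable [NormedSpace ℝ V] [FiniteDimensional ℝ V]

theorem exists_pos_forall_dist_le (hpos : ∀ x, 0 < f x) (hf : Continuous f) (x : V) {r : ℝ}
    (hr : 0 ≤ r) : ∃ m > 0, ∀ w, dist x w ≤ r → m ≤ f w := by
  obtain ⟨w, -, hw⟩ := (isCompact_closedBall x r).exists_isMinOn (nonempty_closedBall.2 hr)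
    hf.continuousOn
  exact ⟨f w, hpos w, fun w' hw' => hw (mem_closedBall'.2 hw')⟩

theorem eventually_infDist_lt_infDist_l2Epigraph (hpos : ∀ x, 0 < f x) (hf : Continuous f)
    (hx₀ : toLp 2 (x₀, y₀) ∈ K) (hy₀ : y₀ ≤ 0) (x : V) :
    ∀ᶠ y in Filter.atBot, infDist (toLp 2 (x, y)) K < infDist (toLp 2 (x, y)) (l2Epigraph f) := by
  obtain ⟨m, hm, hmf⟩ := exists_pos_forall_dist_le hpos hf x (dist_nonneg (x := x) (y := x₀))
  filter_upwards [Filter.eventually_le_atBot y₀,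
    Filter.eventually_le_atBot (-dist x x₀ ^ 2 / (2 * m))] with y hyy₀ hym
  obtain ⟨⟨w, z⟩, hl, hly⟩ := (isClosed_l2Epigraph hf).exists_infDist_eq_dist
    (l2Epigraph_nonempty f) (toLp 2 (x, y))
  have hfz : f w ≤ z := hl
  have hz : 0 < z := (hpos w).trans_le hfz
  rw [hly]
  refine (infDist_le_dist_of_mem hx₀).trans_lt (dist_toLp_lt_dist_toLp_iff.2 ?_)
  rcases le_or_gt (dist x w) (dist x x₀) with hnear | hfar
  · have hmz : m ≤ z := (hmf w hnear).trans hfz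
    have hfar_below : dist x x₀ ^ 2 ≤ -2 * m * y := by
      rw [le_div_iff₀ (by positivity)] at hym
      linarith
    calc dist x x₀ ^ 2 + (y - y₀) ^ 2 ≤ -2 * m * y + y ^ 2 := by nlinarith
      _ < (y - m) ^ 2 := by nlinarith
      _ ≤ (y - z) ^ 2 := by nlinarith
      _ ≤ dist x w ^ 2 + (y - z) ^ 2 := le_add_of_nonneg_left (sq_nonneg _)
  · have hhorizontal : dist x x₀ ^ 2 < dist x w ^ 2 := pow_lt_pow_left₀ hfar dist_nonneg two_ne_zero
    have hvertical : (y - y₀) ^ 2 ≤ (y - z) ^ 2 := by nlinarith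
    exact add_lt_add_of_lt_of_le hhorizontal hvertical

theorem sInf_eq_sSup_equidistantHeights_iff (hK : IsClosed K) (hx₀ : toLp 2 (x₀, y₀) ∈ K)
    (hy₀ : y₀ ≤ 0) (hpos : ∀ x, 0 < f x) (hf : Continuous f) (hd : Disjoint K (l2Epigraph f))
    (x : V) :
    sInf (equidistantHeights K (l2Epigraph f) x) = sSup (equidistantHeights K (l2Epigraph f) x) ↔
      (equidistantHeights K (l2Epigraph f) x).Subsingleton := by
  obtain ⟨m, hm⟩ := Filter.eventually_atBot.1
    (eventually_infDist_lt_infDist_l2Epigraph hpos hf hx₀ hy₀ x)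
  obtain ⟨y, -, hy⟩ := exists_mem_equidistantHeights_uIcc (hm m le_rfl)
    (infDist_l2Epigraph_lt_infDist_of_le hK ⟨_, hx₀⟩ hd le_rfl)
  refine sInf_eq_sSup_iff_subsingleton ⟨y, hy⟩ ⟨m, fun y hy => ?_⟩ ⟨f x, fun y hy => ?_⟩
  · exact le_of_not_ge fun hym => (hm y hym).ne hy
  · exact (lt_of_infDist_le_infDist_l2Epigraph hK ⟨_, hx₀⟩ hd (le_of_eq hy)).le

end Epigraph

section Uniqueness

variable {f : V → ℝ} {K : Set (WithLp 2 (V × ℝ))} {x : V} {a b : ℝ}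

theorem mem_of_not_hasOverhang (hK : IsClosed K) (h : ¬ HasOverhang K) (ha : 0 ≤ a) (hab : a ≤ b)
    (hb : toLp 2 (x, b) ∈ K) : toLp 2 (x, a) ∈ K := by
  rcases hab.eq_or_lt with rfl | hab
  · exact hb
  have hIoo : Ioo a b ⊆ (fun y : ℝ => toLp 2 (x, y)) ⁻¹' K := fun y hy => by
    by_contra hyK
    exact h ⟨x, y, b, ha.trans_lt hy.1, hy.2, hyK, hb⟩
  have hIcc := (hK.preimage (continuous_toLp_right x)).closure_subset_iff.2 hIoo
  rw [closure_Ioo hab.ne] at hIcc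
  exact hIcc (left_mem_Icc.2 hab.le)

theorem infDist_le_infDist_of_not_hasOverhang (hK : IsCompact K) (hne : K.Nonempty)
    (h : ¬ HasOverhang K) (ha : 0 ≤ a) (hab : a ≤ b) :
    infDist (toLp 2 (x, a)) K ≤ infDist (toLp 2 (x, b)) K := by
  obtain ⟨⟨u, v⟩, hk, hkb⟩ := hK.exists_infDist_eq_dist hne (toLp 2 (x, b))
  rw [hkb]
  rcases le_total v a with hva | hav
  · refine (infDist_le_dist_of_mem hk).trans (dist_toLp_le_dist_toLp_iff.2 ?_)
    nlinarith
  · have hua : toLp 2 (u, a) ∈ K := mem_of_not_hasOverhang hK.isClosed h ha hav hk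
    refine (infDist_le_dist_of_mem hua).trans (dist_toLp_le_dist_toLp_iff.2 ?_)
    nlinarith [sq_nonneg (b - v)]

theorem exists_nonpos_infDist_eq_dist (hK : IsCompact K) (hne : K.Nonempty) (h : ¬ HasOverhang K)
    (hb : b ≤ 0) (x : V) :
    ∃ (u : V) (v : ℝ), v ≤ 0 ∧ toLp 2 (u, v) ∈ K ∧
      infDist (toLp 2 (x, b)) K = dist (toLp 2 (x, b)) (toLp 2 (u, v)) := by
  obtain ⟨⟨u, v⟩, hk, hkb⟩ := hK.exists_infDist_eq_dist hne (toLp 2 (x, b))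
  refine ⟨u, v, not_lt.1 fun hv => ?_, hk, hkb⟩
  have hu₀ : toLp 2 (u, 0) ∈ K := mem_of_not_hasOverhang hK.isClosed h le_rfl hv.le hk
  refine (infDist_le_dist_of_mem hu₀).not_gt (hkb.trans_gt (dist_toLp_lt_dist_toLp_iff.2 ?_))
  nlinarith

variable [NormedSpace ℝ V]

theorem infDist_l2Epigraph_lt_of_lt_of_lt (hf : Continuous f) (hconv : ConvexOn ℝ univ f)
    (hab : a < b) (hb : b < f x) :
    infDist (toLp 2 (x, b)) (l2Epigraph f) < infDist (toLp 2 (x, a)) (l2Epigraph f) := by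
  have hac : 0 < f x - a := sub_pos.2 (hab.trans hb)
  have hline : toLp 2 (x, b) =
      AffineMap.lineMap (toLp 2 (x, f x)) (toLp 2 (x, a)) ((f x - b) / (f x - a)) := by
    rw [AffineMap.lineMap_apply_module', ← toLp_sub, ← toLp_smul, ← toLp_add]
    congr 1
    refine Prod.ext ?_ ?_
    · simp
    · simp only [Prod.snd_add, Prod.smul_snd, Prod.snd_sub, smul_eq_mul]
      field_simp
      ring
  have htop : toLp 2 (x, f x) ∈ l2Epigraph f := toLp_mem_l2Epigraph.2 le_rfl
  rw [hline]
  exact infDist_lineMap_lt_infDist (isClosed_l2Epigraph hf) (convex_l2Epigraph hconv htop) htop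
    (fun ha => (hab.trans hb).not_ge ha) (div_pos (sub_pos.2 hb) hac)
    ((div_lt_one hac).2 (sub_lt_sub_left hab _))

theorem infDist_lt_of_infDist_le_of_nonneg (hK : IsCompact K) (hne : K.Nonempty)
    (h : ¬ HasOverhang K) (hf : Continuous f) (hconv : ConvexOn ℝ univ f)
    (hd : Disjoint K (l2Epigraph f)) (ha : 0 ≤ a) (hab : a < b)
    (hb : infDist (toLp 2 (x, b)) K ≤ infDist (toLp 2 (x, b)) (l2Epigraph f)) :
    infDist (toLp 2 (x, a)) K < infDist (toLp 2 (x, a)) (l2Epigraph f) :=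
  calc infDist (toLp 2 (x, a)) K
      ≤ infDist (toLp 2 (x, b)) K := infDist_le_infDist_of_not_hasOverhang hK hne h ha hab.le
    _ ≤ infDist (toLp 2 (x, b)) (l2Epigraph f) := hb
    _ < infDist (toLp 2 (x, a)) (l2Epigraph f) :=
      infDist_l2Epigraph_lt_of_lt_of_lt hf hconv hab
        (lt_of_infDist_le_infDist_l2Epigraph hK.isClosed hne hd hb)

variable [FiniteDimensional ℝ V]

theorem infDist_lt_of_infDist_le_of_nonpos (hK : IsCompact K) (hne : K.Nonempty)
    (h : ¬ HasOverhang K) (hpos : ∀ x, 0 < f x) (hf : Continuous f) (hab : a < b) (hb₀ : b ≤ 0)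
    (hb : infDist (toLp 2 (x, b)) K ≤ infDist (toLp 2 (x, b)) (l2Epigraph f)) :
    infDist (toLp 2 (x, a)) K < infDist (toLp 2 (x, a)) (l2Epigraph f) := by
  obtain ⟨u, v, hv, hk, hkb⟩ := exists_nonpos_infDist_eq_dist hK hne h hb₀ x
  obtain ⟨⟨w, z⟩, hl, hla⟩ := (isClosed_l2Epigraph hf).exists_infDist_eq_dist
    (l2Epigraph_nonempty f) (toLp 2 (x, a))
  have hz : 0 < z := (hpos w).trans_le hl
  rw [hla]
  exact (infDist_le_dist_of_mem hk).trans_lt (dist_toLp_lt_of_dist_toLp_le hab (hv.trans_lt hz)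
    (hkb.ge.trans (hb.trans (infDist_le_dist_of_mem hl))))

theorem infDist_lt_of_infDist_le (hK : IsCompact K) (hne : K.Nonempty) (h : ¬ HasOverhang K)
    (hpos : ∀ x, 0 < f x) (hf : Continuous f) (hconv : ConvexOn ℝ univ f)
    (hd : Disjoint K (l2Epigraph f)) (hab : a < b)
    (hb : infDist (toLp 2 (x, b)) K ≤ infDist (toLp 2 (x, b)) (l2Epigraph f)) :
    infDist (toLp 2 (x, a)) K < infDist (toLp 2 (x, a)) (l2Epigraph f) := by
  rcases le_or_gt 0 a with ha | ha
  · exact infDist_lt_of_infDist_le_of_nonneg hK hne h hf hconv hd ha hab hb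
  rcases le_or_gt b 0 with hb₀ | hb₀
  · exact infDist_lt_of_infDist_le_of_nonpos hK hne h hpos hf hab hb₀ hb
  · exact infDist_lt_of_infDist_le_of_nonpos hK hne h hpos hf ha le_rfl
      (infDist_lt_of_infDist_le_of_nonneg hK hne h hf hconv hd le_rfl hb₀ hb).le

theorem subsingleton_equidistantHeights (hK : IsCompact K) (hne : K.Nonempty)
    (h : ¬ HasOverhang K) (hpos : ∀ x, 0 < f x) (hf : Continuous f) (hconv : ConvexOn ℝ univ f)
    (hd : Disjoint K (l2Epigraph f)) (x : V) :
    (equidistantHeights K (l2Epigraph f) x).Subsingleton := by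
  have not_lt_of_mem {a b : ℝ} (ha : a ∈ equidistantHeights K (l2Epigraph f) x)
      (hb : b ∈ equidistantHeights K (l2Epigraph f) x) : ¬ a < b := fun hab =>
    (infDist_lt_of_infDist_le hK hne h hpos hf hconv hd hab (le_of_eq hb)).ne ha
  exact fun a ha b hb => le_antisymm (le_of_not_gt (not_lt_of_mem hb ha))
    (le_of_not_gt (not_lt_of_mem ha hb))

end Uniqueness

section Overhang

variable [NormedSpace ℝ V] {K : Set (WithLp 2 (V × ℝ))}

theorem exists_affine_lt_of_notMem (hconv : Convex ℝ K) (hK : IsClosed K) {x : V} {y z : ℝ}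
    (hyz : y < z) (hy : toLp 2 (x, y) ∉ K) (hz : toLp 2 (x, z) ∈ K) :
    ∃ ψ : V →L[ℝ] ℝ, ∀ p ∈ K, y + ψ (p.fst - x) < p.snd := by
  obtain ⟨φ, s, hφy, hφK⟩ := geometric_hahn_banach_point_closed hconv hK hy
  let χ : V →L[ℝ] ℝ := φ ∘L (prodContinuousLinearEquiv 2 ℝ V ℝ).symm ∘L
    ContinuousLinearMap.inl ℝ V ℝ
  let c : ℝ := φ (toLp 2 (0, 1))
  have hφ (p : WithLp 2 (V × ℝ)) : φ p - φ (toLp 2 (x, y)) = χ (p.fst - x) + c * (p.snd - y) :=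
    calc φ p - φ (toLp 2 (x, y))
        = φ (toLp 2 (p.fst - x, 0) + (p.snd - y) • toLp 2 (0, 1)) := by
          rw [← map_sub]
          congr 1
          apply ofLp_injective 2
          ext <;> simp
      _ = χ (p.fst - x) + c * (p.snd - y) := by
          rw [map_add, map_smul, smul_eq_mul, mul_comm]
          rfl
  have hφpos : ∀ p ∈ K, 0 < χ (p.fst - x) + c * (p.snd - y) := fun p hp => by
    rw [← hφ, sub_pos]
    exact hφy.trans (hφK p hp)
  have hcpos : 0 < c := by
    have := hφpos _ hz
    simp only [toLp_fst, toLp_snd, sub_self, map_zero, zero_add] at this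
    exact pos_of_mul_pos_left this (sub_pos.2 hyz).le
  refine ⟨-c⁻¹ • χ, fun p hp => ?_⟩
  have : 0 < c⁻¹ * (χ (p.fst - x) + c * (p.snd - y)) := mul_pos (inv_pos.2 hcpos) (hφpos p hp)
  rw [mul_add, inv_mul_cancel_left₀ hcpos.ne'] at this
  change y + -c⁻¹ * χ (p.fst - x) < p.snd
  linarith

theorem exists_overhang_at_max (hconv : Convex ℝ K) (hK : IsCompact K) {x₀ : V} {y₀ : ℝ}
    (hx₀ : toLp 2 (x₀, y₀) ∈ K) (hy₀ : y₀ ≤ 0) (h : HasOverhang K) :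
    ∃ (ψ : V →L[ℝ] ℝ) (u : V) (δ α : ℝ), ψ ≠ 0 ∧ (∀ p ∈ K, ψ (p.fst - u) ≤ 0) ∧
      0 < δ ∧ δ < α ∧ toLp 2 (u, δ) ∉ K ∧ toLp 2 (u, α) ∈ K := by
  obtain ⟨x₁, y₁, y₂, hy₁, hy₁₂, h₁, h₂⟩ := h
  obtain ⟨ψ, hψ⟩ := exists_affine_lt_of_notMem hconv hK.isClosed hy₁₂ h₁ h₂
  obtain ⟨⟨u, α⟩, huα, hmax⟩ := hK.exists_isMaxOn ⟨_, hx₀⟩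
    (ψ.continuous.comp (WithLp.continuous_fst 2 V ℝ)).continuousOn
  have hψu : ∀ p ∈ K, ψ (p.fst - u) ≤ 0 := fun p hp => by
    rw [map_sub, sub_nonpos]
    exact hmax hp
  refine ⟨ψ, u, y₁ + ψ (u - x₁), α, ?_, hψu, ?_, hψ _ huα, fun hu => (hψ _ hu).false, huα⟩
  · rintro rfl
    have : y₁ + 0 < y₀ := hψ _ hx₀
    linarith
  · have : ψ (x₁ - u) ≤ 0 := hψu _ h₂
    rw [← neg_sub, map_neg]
    linarith

theorem exists_norm_lt_map_pos {ψ : V →L[ℝ] ℝ} (hψ : ψ ≠ 0) {ε : ℝ} (hε : 0 < ε) :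
    ∃ e : V, ‖e‖ < ε ∧ 0 < ψ e := by
  obtain ⟨v, hv⟩ : ∃ v, ψ v ≠ 0 := DFunLike.ne_iff.1 hψ
  obtain ⟨t, ht, htε⟩ := exists_pos_mul_lt hε ‖ψ v • v‖
  refine ⟨t • ψ v • v, ?_, ?_⟩
  · rwa [norm_smul, Real.norm_of_nonneg ht.le, mul_comm]
  · rw [map_smul, map_smul, smul_eq_mul, smul_eq_mul]
    exact mul_pos ht (mul_self_pos.2 hv)

/-- The convex function falling from height `h` at `u` in the direction in which `ψ` increases, cut
off below at height `δ`. -/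
def wedge (ψ : V →L[ℝ] ℝ) (u : V) (δ h : ℝ) (w : V) : ℝ :=
  max δ (h - ψ (w - u))

theorem continuous_wedge (ψ : V →L[ℝ] ℝ) (u : V) (δ h : ℝ) : Continuous (wedge ψ u δ h) := by
  unfold wedge
  fun_prop

theorem convexOn_wedge (ψ : V →L[ℝ] ℝ) (u : V) (δ h : ℝ) : ConvexOn ℝ univ (wedge ψ u δ h) := by
  have hslope : ConvexOn ℝ univ fun w => h - ψ (w - u) := by
    have hsplit : (fun w => h - ψ (w - u)) = fun w => (-ψ).toLinearMap w + (h + ψ u) := by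
      ext w
      simp only [map_sub, ContinuousLinearMap.coe_coe, neg_apply]
      ring
    rw [hsplit]
    exact ((-ψ).toLinearMap.convexOn convex_univ).add_const (h + ψ u)
  exact (convexOn_const δ convex_univ).sup hslope

theorem disjoint_l2Epigraph_wedge {ψ : V →L[ℝ] ℝ} {u : V} {δ h : ℝ}
    (hψ : ∀ p ∈ K, ψ (p.fst - u) ≤ 0) (hh : ∀ p ∈ K, p.snd < h) :
    Disjoint K (l2Epigraph (wedge ψ u δ h)) := by
  refine Set.disjoint_left.2 fun p hp hpL => ?_
  have hle : h - ψ (p.fst - u) ≤ p.snd := (le_max_right _ _).trans hpL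
  linarith [hψ p hp, hh p hp]

theorem exists_not_subsingleton_equidistantHeights (hconv : Convex ℝ K) (hK : IsCompact K) {x₀ : V}
    {y₀ : ℝ} (hx₀ : toLp 2 (x₀, y₀) ∈ K) (hy₀ : y₀ ≤ 0) (h : HasOverhang K) :
    ∃ f : V → ℝ, (∀ x, 0 < f x) ∧ Continuous f ∧ ConvexOn ℝ univ f ∧ Disjoint K (l2Epigraph f) ∧
      ∃ x, ¬ (equidistantHeights K (l2Epigraph f) x).Subsingleton := by
  obtain ⟨ψ, u, δ, α, hψ, hψu, hδ, hδα, huδ, huα⟩ := exists_overhang_at_max hconv hK hx₀ hy₀ h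
  obtain ⟨H, hH⟩ := hK.bddAbove_image (WithLp.continuous_snd 2 V ℝ).continuousOn
  have hlt : ∀ p ∈ K, p.snd < H + 1 := fun p hp =>
    (hH (mem_image_of_mem _ hp)).trans_lt (lt_add_one H)
  have hδH : δ < H + 1 := hδα.trans (hlt _ huα)
  obtain ⟨e, heK, hψe⟩ := exists_norm_lt_map_pos hψ
    ((hK.isClosed.notMem_iff_infDist_pos ⟨_, hx₀⟩).1 huδ)
  let M : ℝ := (H + 1 - δ) / ψ e
  have hM : 0 ≤ M := div_nonneg (sub_nonneg.2 hδH.le) hψe.le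
  have hMe : M * ψ e = H + 1 - δ := div_mul_cancel₀ _ hψe.ne'
  let f : V → ℝ := wedge (M • ψ) u δ (H + 1)
  have hf : Continuous f := continuous_wedge ..
  have hd : Disjoint K (l2Epigraph f) :=
    disjoint_l2Epigraph_wedge (fun p hp => mul_nonpos_of_nonneg_of_nonpos hM (hψu p hp)) hlt
  have hfall : f (u + e) ≤ δ := by simp [f, wedge, hMe]
  have hdist : dist u (u + e) < infDist (toLp 2 (u, δ)) K := by rwa [dist_self_add_right]
  exact ⟨f, fun _ => lt_max_of_lt_left hδ, hf, convexOn_wedge .., hd, u,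
    not_subsingleton_equidistantHeights_of_dist_lt hK.isClosed hf hd hδα huα hfall hdist⟩

end Overhang

theorem stmt10_general [NormedSpace ℝ V] [FiniteDimensional ℝ V] {K : Set (WithLp 2 (V × ℝ))}
    (hKconv : Convex ℝ K) (hKcp : IsCompact K) {x₀ : V} {y₀ : ℝ} (hx₀ : toLp 2 (x₀, y₀) ∈ K)
    (hy₀ : y₀ ≤ 0) :
    (∀ f : V → ℝ, (∀ x, 0 < f x) → Continuous f → ConvexOn ℝ univ f → K ∩ l2Epigraph f = ∅ →
        ∀ x, sInf (equidistantHeights K (l2Epigraph f) x) =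
          sSup (equidistantHeights K (l2Epigraph f) x)) ↔
      ¬ HasOverhang K := by
  refine ⟨fun h hover => ?_, fun h f hpos hf hconv hd x => ?_⟩
  · obtain ⟨f, hpos, hf, hconv, hd, x, hx⟩ :=
      exists_not_subsingleton_equidistantHeights hKconv hKcp hx₀ hy₀ hover
    exact hx ((sInf_eq_sSup_equidistantHeights_iff hKcp.isClosed hx₀ hy₀ hpos hf hd x).1
      (h f hpos hf hconv hd.inter_eq x))
  · have hd : Disjoint K (l2Epigraph f) := disjoint_iff_inter_eq_empty.2 hd
    exact (sInf_eq_sSup_equidistantHeights_iff hKcp.isClosed hx₀ hy₀ hpos hf hd x).2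
      (subsingleton_equidistantHeights hKcp ⟨_, hx₀⟩ h hpos hf hconv hd x)

end EquidistantHeights

theorem stmt10 {n : ℕ} (K : Set (EucProd n)) (hKconv : Convex ℝ K) (hKcp : IsCompact K)
    (x₀ : EuclideanSpace ℝ (Fin n)) (y₀ : ℝ) (hx₀ : pt x₀ y₀ ∈ K) (hy₀ : y₀ ≤ 0) :
    (∀ f : EuclideanSpace ℝ (Fin n) → ℝ,
        (∀ x, 0 < f x) → Continuous f → ConvexOn ℝ Set.univ f →
        K ∩ epigraph f = ∅ →
        ∀ x, Gminus K (epigraph f) x = Gplus K (epigraph f) x) ↔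
      ¬ ∃ (x₁ : EuclideanSpace ℝ (Fin n)) (y₁ y₂ : ℝ),
        0 < y₁ ∧ y₁ < y₂ ∧ pt x₁ y₁ ∉ K ∧ pt x₁ y₂ ∈ K :=
  stmt10_general hKconv hKcp hx₀ hy₀

end
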